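/- Consider the setting of the linear problem: q_e : 𝕋_L → ℝ smooth and positive, ω₀ > 0, and smooth Q, F, G on 𝕋_L × [0,∞) with smooth b : 𝕋_L → ℝ satisfying ∂_s Q − ω₀ q_e(s) ∂_ψ² Q = F + ∂_ψ² G, Q(s,0) = b(s), Q(s,ψ) → 0 as ψ → ∞. Fix integers k, m ≥ 0 and write Q^{(j)} := ∂_s^j Q, F^{(k)} := ∂_s^k F, G^{(k)} := ∂_s^k G. Then there is a constant C (depending on k, m, L, ω₀, q_e) such that ‖⟨ψ⟩^m ∂_s Q^{(k)}‖²_{L²} ≤ C ( ‖⟨ψ⟩^m F^{(k)}‖²_{L²} + ‖⟨ψ⟩^m ∂_ψ² G^{(k)}‖²_{L²} + ‖b‖²_{H^{k+1}(𝕋_L)} + 𝟙_{m≥1} ‖⟨ψ⟩^{m−1} ∂_ψ Q^{(k)}‖²_{L²} + 𝟙_{k≥1} Σ_{k'=0}^{k−1} ‖⟨ψ⟩^m ∂_ψ² Q^{(k')}‖²_{L²} ), provided all norms appearing are finite. -/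

import Mathlib

open MeasureTheory Set Function Filter

/-- `k`-th partial derivative in the tangential variable `s` of a function on
`𝕋_L × [0,∞)` (represented as a curried function `ℝ → ℝ → ℝ`). -/
noncomputable def dS (k : ℕ) (h : ℝ → ℝ → ℝ) : ℝ → ℝ → ℝ :=
  fun s ψ => iteratedDeriv k (fun s' => h s' ψ) s

/-- `j`-th partial derivative in the normal (von Mises) variable `ψ`. -/
noncomputable def dPsi (j : ℕ) (h : ℝ → ℝ → ℝ) : ℝ → ℝ → ℝ :=
  fun s ψ => iteratedDeriv j (fun ψ' => h s ψ') ψ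

/-- Squared `L²` norm over `𝕋_L × ℝ₊` (fundamental domain `(0,L] × (0,∞)`). -/
noncomputable def L2sq (L : ℝ) (h : ℝ → ℝ → ℝ) : ℝ :=
  ∫ p in Ioc (0:ℝ) L ×ˢ Ioi (0:ℝ), (h p.1 p.2) ^ 2

/-- Square-integrability over `𝕋_L × ℝ₊`. -/
def FiniteL2 (L : ℝ) (h : ℝ → ℝ → ℝ) : Prop :=
  IntegrableOn (fun p : ℝ × ℝ => (h p.1 p.2) ^ 2) (Ioc (0:ℝ) L ×ˢ Ioi (0:ℝ))

/-- The weight `⟨ψ⟩^m h`. -/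
noncomputable def wt (m : ℕ) (h : ℝ → ℝ → ℝ) : ℝ → ℝ → ℝ :=
  fun s ψ => (1 + ψ) ^ m * h s ψ

/-- Squared `X_{k,m}` norm:
`‖h‖²_{X_{k,m}} = Σ_{k'≤k} Σ_{m'≤m} (‖⟨ψ⟩^{m'}∂_s^{k'}h‖² + ‖⟨ψ⟩^{m'}∂_s^{k'+1}h‖²
+ ‖⟨ψ⟩^{m'}∂_ψ∂_s^{k'}h‖² + ‖⟨ψ⟩^{m'}∂_ψ²∂_s^{k'}h‖²)`. -/
noncomputable def XnormSq (L : ℝ) (k m : ℕ) (h : ℝ → ℝ → ℝ) : ℝ :=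
  ∑ k' ∈ Finset.range (k+1), ∑ m' ∈ Finset.range (m+1),
    (L2sq L (wt m' (dS k' h)) + L2sq L (wt m' (dS (k'+1) h))
      + L2sq L (wt m' (dPsi 1 (dS k' h))) + L2sq L (wt m' (dPsi 2 (dS k' h))))

/-- The `X_{k,m}` norm. -/
noncomputable def Xnorm (L : ℝ) (k m : ℕ) (h : ℝ → ℝ → ℝ) : ℝ :=
  Real.sqrt (XnormSq L k m h)

/-- Membership in the space `X_{k,m}`: all the defining integrands are integrable. -/
def XFinite (L : ℝ) (k m : ℕ) (h : ℝ → ℝ → ℝ) : Prop :=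
  ∀ k' ≤ k, ∀ m' ≤ m,
    FiniteL2 L (wt m' (dS k' h)) ∧ FiniteL2 L (wt m' (dS (k'+1) h))
      ∧ FiniteL2 L (wt m' (dPsi 1 (dS k' h))) ∧ FiniteL2 L (wt m' (dPsi 2 (dS k' h)))

/-- Joint smoothness of a curried function of two real variables. -/
def Smooth2 (h : ℝ → ℝ → ℝ) : Prop :=
  ContDiff ℝ (⊤ : ℕ∞) (fun p : ℝ × ℝ => h p.1 p.2)

/-- Periodicity in the first (tangential) variable. -/
def PeriodicS (L : ℝ) (h : ℝ → ℝ → ℝ) : Prop :=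
  ∀ ψ : ℝ, Function.Periodic (fun s => h s ψ) L

/-- Squared `H^n` norm of a function on `𝕋_L`. -/
noncomputable def HnormSq (L : ℝ) (n : ℕ) (b : ℝ → ℝ) : ℝ :=
  ∑ j ∈ Finset.range (n+1), ∫ s in (0:ℝ)..L, (iteratedDeriv j b s) ^ 2

theorem aux_hasS {h : ℝ → ℝ → ℝ} (hh : Smooth2 h) (s ψ : ℝ) :
    HasDerivAt (fun s' => h s' ψ) (fderiv ℝ (fun p : ℝ × ℝ => h p.1 p.2) (s, ψ) (1, 0)) s := by
  have h1 : HasFDerivAt (fun p : ℝ × ℝ => h p.1 p.2)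
      (fderiv ℝ (fun p : ℝ × ℝ => h p.1 p.2) (s, ψ)) (s, ψ) :=
    (hh.differentiable (by simp) _).hasFDerivAt
  have h2 : HasDerivAt (fun s' : ℝ => (s', ψ)) ((1 : ℝ), (0 : ℝ)) s :=
    (hasDerivAt_id s).prodMk (hasDerivAt_const s ψ)
  exact h1.comp_hasDerivAt s h2

theorem aux_hasP {h : ℝ → ℝ → ℝ} (hh : Smooth2 h) (s ψ : ℝ) :
    HasDerivAt (fun ψ' => h s ψ') (fderiv ℝ (fun p : ℝ × ℝ => h p.1 p.2) (s, ψ) (0, 1)) ψ := by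
  have h1 : HasFDerivAt (fun p : ℝ × ℝ => h p.1 p.2)
      (fderiv ℝ (fun p : ℝ × ℝ => h p.1 p.2) (s, ψ)) (s, ψ) :=
    (hh.differentiable (by simp) _).hasFDerivAt
  have h2 : HasDerivAt (fun ψ' : ℝ => (s, ψ')) ((0 : ℝ), (1 : ℝ)) ψ :=
    (hasDerivAt_const ψ s).prodMk (hasDerivAt_id ψ)
  exact h1.comp_hasDerivAt ψ h2

theorem aux_dS1 {h : ℝ → ℝ → ℝ} (hh : Smooth2 h) (s ψ : ℝ) :
    dS 1 h s ψ = fderiv ℝ (fun p : ℝ × ℝ => h p.1 p.2) (s, ψ) (1, 0) := by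
  simp only [dS, iteratedDeriv_one]
  exact (aux_hasS hh s ψ).deriv

theorem aux_dP1 {h : ℝ → ℝ → ℝ} (hh : Smooth2 h) (s ψ : ℝ) :
    dPsi 1 h s ψ = fderiv ℝ (fun p : ℝ × ℝ => h p.1 p.2) (s, ψ) (0, 1) := by
  simp only [dPsi, iteratedDeriv_one]
  exact (aux_hasP hh s ψ).deriv

theorem hasS {h : ℝ → ℝ → ℝ} (hh : Smooth2 h) (s ψ : ℝ) :
    HasDerivAt (fun s' => h s' ψ) (dS 1 h s ψ) s := by
  rw [aux_dS1 hh]; exact aux_hasS hh s ψ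

theorem hasP {h : ℝ → ℝ → ℝ} (hh : Smooth2 h) (s ψ : ℝ) :
    HasDerivAt (fun ψ' => h s ψ') (dPsi 1 h s ψ) ψ := by
  rw [aux_dP1 hh]; exact aux_hasP hh s ψ

theorem dS1_eq {h : ℝ → ℝ → ℝ} {s ψ d : ℝ} (hd : HasDerivAt (fun s' => h s' ψ) d s) :
    dS 1 h s ψ = d := by
  simp only [dS, iteratedDeriv_one]; exact hd.deriv

theorem dP1_eq {h : ℝ → ℝ → ℝ} {s ψ d : ℝ} (hd : HasDerivAt (fun ψ' => h s ψ') d ψ) :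
    dPsi 1 h s ψ = d := by
  simp only [dPsi, iteratedDeriv_one]; exact hd.deriv

theorem smooth_dS1 {h : ℝ → ℝ → ℝ} (hh : Smooth2 h) : Smooth2 (dS 1 h) := by
  unfold Smooth2
  have : (fun p : ℝ × ℝ => dS 1 h p.1 p.2)
      = fun p => fderiv ℝ (fun p : ℝ × ℝ => h p.1 p.2) p (1, 0) := by
    ext p; exact aux_dS1 hh p.1 p.2
  rw [this]
  exact (hh.fderiv_right (m := (⊤ : ℕ∞)) (by simp)).clm_apply contDiff_const

theorem smooth_dP1 {h : ℝ → ℝ → ℝ} (hh : Smooth2 h) : Smooth2 (dPsi 1 h) := by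
  unfold Smooth2
  have : (fun p : ℝ × ℝ => dPsi 1 h p.1 p.2)
      = fun p => fderiv ℝ (fun p : ℝ × ℝ => h p.1 p.2) p (0, 1) := by
    ext p; exact aux_dP1 hh p.1 p.2
  rw [this]
  exact (hh.fderiv_right (m := (⊤ : ℕ∞)) (by simp)).clm_apply contDiff_const

theorem dS_zero (h : ℝ → ℝ → ℝ) : dS 0 h = h := by
  ext s ψ; simp [dS]

theorem dS_succ (k : ℕ) (h : ℝ → ℝ → ℝ) : dS (k + 1) h = dS 1 (dS k h) := by
  ext s ψ
  simp only [dS, iteratedDeriv_succ, iteratedDeriv_zero]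

theorem dP_two (h : ℝ → ℝ → ℝ) : dPsi 2 h = dPsi 1 (dPsi 1 h) := by
  ext s ψ
  simp only [dPsi, iteratedDeriv_succ, iteratedDeriv_zero]

theorem smooth_dS (k : ℕ) {h : ℝ → ℝ → ℝ} (hh : Smooth2 h) : Smooth2 (dS k h) := by
  induction k with
  | zero => rwa [dS_zero]
  | succ k ih => rw [dS_succ]; exact smooth_dS1 ih

theorem smooth_dP2 {h : ℝ → ℝ → ℝ} (hh : Smooth2 h) : Smooth2 (dPsi 2 h) := by
  rw [dP_two]; exact smooth_dP1 (smooth_dP1 hh)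

theorem aux_clm {D : ℝ × ℝ → (ℝ × ℝ →L[ℝ] ℝ)} {D' : ℝ × ℝ →L[ℝ] (ℝ × ℝ →L[ℝ] ℝ)}
    {c : ℝ → ℝ × ℝ} {c' : ℝ × ℝ} {t : ℝ} (hd : HasFDerivAt D D' (c t)) (hc : HasDerivAt c c' t)
    (w : ℝ × ℝ) : HasDerivAt (fun x => D (c x) w) (D' c' w) t := by
  have h1 : HasDerivAt (fun x => D (c x)) (D' c') t := hd.comp_hasDerivAt t hc
  exact (ContinuousLinearMap.apply ℝ ℝ w).hasFDerivAt.comp_hasDerivAt t h1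

theorem comm11 {h : ℝ → ℝ → ℝ} (hh : Smooth2 h) : dS 1 (dPsi 1 h) = dPsi 1 (dS 1 h) := by
  ext s ψ
  have hc : ContDiff ℝ (⊤ : ℕ∞) (fderiv ℝ (fun p : ℝ × ℝ => h p.1 p.2)) :=
    hh.fderiv_right (m := (⊤ : ℕ∞)) (by simp)
  have hd := (hc.differentiable (by simp) (s, ψ)).hasFDerivAt
  have hsym : IsSymmSndFDerivAt ℝ (fun p : ℝ × ℝ => h p.1 p.2) (s, ψ) :=
    (ContDiff.contDiffAt hh).isSymmSndFDerivAt (by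
      simp only [minSmoothness_of_isRCLikeNormedField]
      exact WithTop.coe_le_coe.2 le_top)
  have h2 : HasDerivAt (fun s' : ℝ => (s', ψ)) ((1 : ℝ), (0 : ℝ)) s :=
    (hasDerivAt_id s).prodMk (hasDerivAt_const s ψ)
  have h3 : HasDerivAt (fun ψ' : ℝ => (s, ψ')) ((0 : ℝ), (1 : ℝ)) ψ :=
    (hasDerivAt_const ψ s).prodMk (hasDerivAt_id ψ)
  have e1 : dS 1 (dPsi 1 h) s ψ =
      fderiv ℝ (fderiv ℝ (fun p : ℝ × ℝ => h p.1 p.2)) (s, ψ) (1, 0) (0, 1) := by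
    apply dS1_eq
    simp only [aux_dP1 hh]
    exact aux_clm (c := fun s' : ℝ => (s', ψ)) hd h2 _
  have e2 : dPsi 1 (dS 1 h) s ψ =
      fderiv ℝ (fderiv ℝ (fun p : ℝ × ℝ => h p.1 p.2)) (s, ψ) (0, 1) (1, 0) := by
    apply dP1_eq
    simp only [aux_dS1 hh]
    exact aux_clm (c := fun ψ' : ℝ => (s, ψ')) hd h3 _
  rw [e1, e2, hsym.eq]

theorem comm_k1 (k : ℕ) {h : ℝ → ℝ → ℝ} (hh : Smooth2 h) :
    dS k (dPsi 1 h) = dPsi 1 (dS k h) := by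
  induction k with
  | zero => simp only [dS_zero]
  | succ k ih => rw [dS_succ, ih, comm11 (smooth_dS k hh), ← dS_succ]

theorem comm_k2 (k : ℕ) {h : ℝ → ℝ → ℝ} (hh : Smooth2 h) :
    dS k (dPsi 2 h) = dPsi 2 (dS k h) := by
  rw [dP_two, comm_k1 k (smooth_dP1 hh), comm_k1 k hh, ← dP_two]

theorem per_dS1 {L : ℝ} {h : ℝ → ℝ → ℝ} (hp : PeriodicS L h) : PeriodicS L (dS 1 h) := by
  intro ψ s
  simp only [dS, iteratedDeriv_one]
  rw [← deriv_comp_add_const]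
  congr 1
  ext x
  exact hp ψ x

theorem per_dS (k : ℕ) {L : ℝ} {h : ℝ → ℝ → ℝ} (hp : PeriodicS L h) :
    PeriodicS L (dS k h) := by
  induction k with
  | zero => rwa [dS_zero]
  | succ k ih => rw [dS_succ]; exact per_dS1 ih

theorem per_dP1 {L : ℝ} {h : ℝ → ℝ → ℝ} (hp : PeriodicS L h) : PeriodicS L (dPsi 1 h) := by
  intro ψ s
  simp only [dPsi, iteratedDeriv_one]
  congr 1
  ext x
  exact hp x s

theorem smooth_line {h : ℝ → ℝ → ℝ} (hh : Smooth2 h) (ψ : ℝ) :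
    ContDiff ℝ (⊤ : ℕ∞) (fun s => h s ψ) :=
  ContDiff.comp (g := fun p : ℝ × ℝ => h p.1 p.2) hh (contDiff_id.prodMk contDiff_const)

theorem smooth_col {h : ℝ → ℝ → ℝ} (hh : Smooth2 h) (s : ℝ) :
    ContDiff ℝ (⊤ : ℕ∞) (fun ψ => h s ψ) :=
  ContDiff.comp (g := fun p : ℝ × ℝ => h p.1 p.2) hh (contDiff_const.prodMk contDiff_id)

theorem cont2 {h : ℝ → ℝ → ℝ} (hh : Smooth2 h) : Continuous (fun p : ℝ × ℝ => h p.1 p.2) :=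
  ContDiff.continuous hh

theorem rect_int {f : ℝ × ℝ → ℝ} (hf : Continuous f) (L R : ℝ) :
    IntegrableOn f (Ioc (0:ℝ) L ×ˢ Ioc (0:ℝ) R) := by
  have : IntegrableOn f (Icc (0:ℝ) L ×ˢ Icc (0:ℝ) R) :=
    hf.continuousOn.integrableOn_compact (isCompact_Icc.prod isCompact_Icc)
  exact this.mono_set (prod_mono Ioc_subset_Icc_self Ioc_subset_Icc_self)

theorem int_dP {L R : ℝ} (hR : 0 ≤ R) {g : ℝ → ℝ → ℝ} (hg : Smooth2 g)
    (h0 : ∀ s, g s 0 = 0) (h1 : ∀ s, g s R = 0) :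
    ∫ p in Ioc (0:ℝ) L ×ˢ Ioc (0:ℝ) R, dPsi 1 g p.1 p.2 = 0 := by
  have hi := rect_int (cont2 (smooth_dP1 hg)) L R
  rw [Measure.volume_eq_prod] at hi ⊢
  rw [setIntegral_prod _ hi]
  have : ∀ s, ∫ y in Ioc (0:ℝ) R, dPsi 1 g s y = 0 := by
    intro s
    rw [← intervalIntegral.integral_of_le hR,
      intervalIntegral.integral_eq_sub_of_hasDerivAt (fun x _ => hasP hg s x)
        ((smooth_col (smooth_dP1 hg) s).continuous.intervalIntegrable _ _), h0, h1, sub_zero]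
  simp [this]

theorem int_dS {L R : ℝ} (hL : 0 ≤ L) {g : ℝ → ℝ → ℝ} (hg : Smooth2 g)
    (hp : PeriodicS L g) :
    ∫ p in Ioc (0:ℝ) L ×ˢ Ioc (0:ℝ) R, dS 1 g p.1 p.2 = 0 := by
  have hi := rect_int (cont2 (smooth_dS1 hg)) L R
  rw [Measure.volume_eq_prod] at hi ⊢
  rw [← Measure.prod_restrict]
  rw [IntegrableOn, ← Measure.prod_restrict] at hi
  rw [integral_prod_symm _ hi]
  have : ∀ ψ, ∫ x in Ioc (0:ℝ) L, dS 1 g x ψ = 0 := by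
    intro ψ
    rw [← intervalIntegral.integral_of_le hL,
      intervalIntegral.integral_eq_sub_of_hasDerivAt (fun x _ => hasS hg x ψ)
        ((smooth_line (smooth_dS1 hg) ψ).continuous.intervalIntegrable _ _)]
    have := hp ψ 0
    simp only [zero_add] at this
    rw [this, sub_self]
  simp [this]

/-- The integrated-by-parts identity with weight `W` vanishing at `R`. -/
theorem ibp {L R : ℝ} (hL : 0 ≤ L) (hR : 0 ≤ R) {v : ℝ → ℝ → ℝ} (hv : Smooth2 v)
    (hp : PeriodicS L v) (h0 : ∀ s, v s 0 = 0) {W W' : ℝ → ℝ} (hW : ContDiff ℝ (⊤ : ℕ∞) W)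
    (hW' : ∀ x, HasDerivAt W (W' x) x) (hWR : W R = 0) :
    ∫ p in Ioc (0:ℝ) L ×ˢ Ioc (0:ℝ) R,
      (dPsi 2 v p.1 p.2 * dS 1 v p.1 p.2 * W p.2 + dPsi 1 v p.1 p.2 * dS 1 v p.1 p.2 * W' p.2)
      = 0 := by
  have hvp := smooth_dP1 hv
  have hvs := smooth_dS1 hv
  have hW2 : ContDiff ℝ (⊤ : ℕ∞) (fun p : ℝ × ℝ => W p.2) := hW.comp contDiff_snd
  have hg : Smooth2 (fun s ψ => dPsi 1 v s ψ * dS 1 v s ψ * W ψ) := by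
    unfold Smooth2
    exact (ContDiff.mul hvp hvs).mul hW2
  have hf : Smooth2 (fun s ψ => dPsi 1 v s ψ ^ 2 / 2 * W ψ) := by
    unfold Smooth2
    exact ((ContDiff.pow hvp 2).div_const 2).mul hW2
  have i1 := int_dP (L := L) hR hg (by
    intro s
    have : dS 1 v s 0 = 0 := by
      apply dS1_eq
      simp only [h0]
      exact hasDerivAt_const _ _
    simp [this]) (by intro s; simp [hWR])
  have i2 := int_dS (R := R) hL hf (by
    intro ψ s
    have := per_dP1 hp ψ s
    simp only at this ⊢
    rw [this])
  have := integral_sub (rect_int (cont2 (smooth_dP1 hg)) L R) (rect_int (cont2 (smooth_dS1 hf)) L R)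
  rw [i1, i2, sub_zero] at this
  refine Eq.trans ?_ this
  refine integral_congr_ae (Eventually.of_forall ?_)
  rintro ⟨s, ψ⟩
  have e1 := dP1_eq (h := fun s ψ => dPsi 1 v s ψ * dS 1 v s ψ * W ψ)
    (((hasP hvp s ψ).mul (hasP hvs s ψ)).mul (hW' ψ))
  have e2 := dS1_eq (h := fun s ψ => dPsi 1 v s ψ ^ 2 / 2 * W ψ)
    ((((hasS hvp s ψ).pow 2).div_const 2).mul_const (W ψ))
  simp only [e1, e2, comm11 hv, dP_two]
  simp
  ring

theorem wW_bound (m : ℕ) {ψ R : ℝ} (h0 : 0 < ψ) (hR : 1 ≤ R) (hψ : ψ ≤ R) :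
    |2 * m * (1 + ψ) ^ (2 * m - 1) * (1 - ψ / R) - (1 + ψ) ^ (2 * m) / R|
      ≤ (2 * m + 2) * ((1 + ψ) ^ (m - 1) * (1 + ψ) ^ m) := by
  have hR0 : 0 < R := by linarith
  have hθ0 : 0 ≤ 1 - ψ / R := by
    have : ψ / R ≤ 1 := (div_le_one hR0).2 hψ
    linarith
  have hθ1 : 1 - ψ / R ≤ 1 := by
    have : 0 ≤ ψ / R := by positivity
    linarith
  have e1 : 2 * (m : ℝ) * (1 + ψ) ^ (2 * m - 1)
      = 2 * m * ((1 + ψ) ^ (m - 1) * (1 + ψ) ^ m) := by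
    rcases Nat.eq_zero_or_pos m with rfl | hm
    · simp
    · rw [← pow_add]; congr 2; omega
  have e2 : (1 + ψ) ^ (2 * m) / R ≤ 2 * ((1 + ψ) ^ (m - 1) * (1 + ψ) ^ m) := by
    rw [div_le_iff₀ hR0]
    calc (1 + ψ) ^ (2 * m) ≤ (1 + ψ) ^ ((m - 1) + m + 1) :=
          pow_le_pow_right₀ (by linarith) (by omega)
      _ = ((1 + ψ) ^ (m - 1) * (1 + ψ) ^ m) * (1 + ψ) := by rw [pow_succ, pow_add]
      _ ≤ ((1 + ψ) ^ (m - 1) * (1 + ψ) ^ m) * (2 * R) := by gcongr; linarith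
      _ = _ := by ring
  have p1 : 0 ≤ 2 * (m : ℝ) * ((1 + ψ) ^ (m - 1) * (1 + ψ) ^ m) := by positivity
  have p2 : 0 ≤ (1 + ψ) ^ (2 * m) / R := by positivity
  rw [e1, abs_le]
  have := mul_le_of_le_one_right p1 hθ1
  have := mul_nonneg p1 hθ0
  constructor <;> linarith

theorem alg_bound {a d h q q0 w M W W' vs vp H : ℝ} {ω : ℝ} (hω : 0 < ω) (hq0 : 0 < q0) (hq : q0 ≤ q)
    (hW0 : 0 ≤ W) (hW : W ≤ w ^ 2) (hM : 0 ≤ M) {x : ℝ} (hx : 0 ≤ x) (hw : 0 ≤ w)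
    (hW' : |W'| ≤ M * (x * w)) (ha : a = w * vs) (hd : d = x * vp) (hh : h = w * H) :
    |vs ^ 2 * W / q + ω * (vp * vs * W') - H * vs * W / q|
      ≤ (1 / q0) * a ^ 2 + ω * M * (a ^ 2 + d ^ 2) + (1 / q0) * (h ^ 2 + a ^ 2) := by
  have hqp : 0 < q := by linarith
  have hinv : 1 / q ≤ 1 / q0 := one_div_le_one_div_of_le hq0 hq
  have t1 : |vs ^ 2 * W / q| ≤ (1 / q0) * a ^ 2 := by
    rw [abs_of_nonneg (by positivity), ha]
    calc vs ^ 2 * W / q = (1 / q) * (vs ^ 2 * W) := by ring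
      _ ≤ (1 / q0) * (vs ^ 2 * w ^ 2) := by gcongr
      _ = _ := by ring
  have t2 : |ω * (vp * vs * W')| ≤ ω * M * (a ^ 2 + d ^ 2) := by
    rw [abs_mul, abs_of_pos hω, mul_assoc ω M]
    refine mul_le_mul_of_nonneg_left ?_ hω.le
    calc |vp * vs * W'| = |vp| * |vs| * |W'| := by rw [abs_mul, abs_mul]
      _ ≤ |vp| * |vs| * (M * (x * w)) := by gcongr
      _ = M * (|d| * |a|) := by
        rw [ha, hd, abs_mul, abs_mul, abs_of_nonneg hx, abs_of_nonneg hw]; ring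
      _ ≤ M * (a ^ 2 + d ^ 2) := by
        gcongr
        nlinarith [sq_nonneg (|d| - |a|), sq_abs a, sq_abs d, sq_nonneg a, sq_nonneg d]
  have t3 : |H * vs * W / q| ≤ (1 / q0) * (h ^ 2 + a ^ 2) := by
    calc |H * vs * W / q| = (1 / q) * (|H| * |vs| * W) := by
          rw [abs_div, abs_mul, abs_mul, abs_of_nonneg hW0, abs_of_pos hqp]; ring
      _ ≤ (1 / q0) * (|H| * |vs| * w ^ 2) := by gcongr
      _ = (1 / q0) * (|h| * |a|) := by
        rw [ha, hh, abs_mul, abs_mul, abs_of_nonneg hw]; ring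
      _ ≤ (1 / q0) * (h ^ 2 + a ^ 2) := by
        gcongr
        nlinarith [sq_nonneg (|h| - |a|), sq_abs a, sq_abs h, sq_nonneg a, sq_nonneg h]
  calc _ ≤ |vs ^ 2 * W / q + ω * (vp * vs * W')| + |H * vs * W / q| := abs_sub _ _
    _ ≤ |vs ^ 2 * W / q| + |ω * (vp * vs * W')| + |H * vs * W / q| := by
      gcongr; exact abs_add_le _ _
    _ ≤ _ := by linarith

theorem alg_young {a d h q q0 q1 μ : ℝ} (hq0 : 0 < q0) (hq : q0 ≤ q) (hq1 : q ≤ q1) :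
    a ^ 2 / (2 * q1) - h ^ 2 / q0 - μ ^ 2 * q1 * d ^ 2
      ≤ a ^ 2 / q + μ * (d * a) - h * a / q := by
  have hqp : 0 < q := by linarith
  have hq1p : 0 < q1 := by linarith
  have b1 : a ^ 2 / (2 * q1) ≤ a ^ 2 / (2 * q) := by gcongr
  have b2 : h ^ 2 / q ≤ h ^ 2 / q0 := by gcongr
  have b3 : μ ^ 2 * q * d ^ 2 ≤ μ ^ 2 * q1 * d ^ 2 := by gcongr
  have key : a ^ 2 / (2 * q) - h ^ 2 / q - μ ^ 2 * q * d ^ 2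
      ≤ a ^ 2 / q + μ * (d * a) - h * a / q := by
    have : a ^ 2 / q + μ * (d * a) - h * a / q - (a ^ 2 / (2 * q) - h ^ 2 / q - μ ^ 2 * q * d ^ 2)
        = ((a / 2 - h) ^ 2 + (a / 2 + μ * q * d) ^ 2) / q := by
      field_simp; ring
    have h2 : 0 ≤ ((a / 2 - h) ^ 2 + (a / 2 + μ * q * d) ^ 2) / q := by positivity
    linarith
  linarith

theorem core {L : ℝ} (hL : 0 < L) {q : ℝ → ℝ} (hqc : Continuous q) {q0 q1 : ℝ} (hq0 : 0 < q0)
    (hqp : ∀ s, 0 < q s)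
    (hq : ∀ s ∈ Ioc (0:ℝ) L, q0 ≤ q s) (hq1 : ∀ s ∈ Ioc (0:ℝ) L, q s ≤ q1) {ω : ℝ} (hω : 0 < ω)
    (m : ℕ) {v : ℝ → ℝ → ℝ} (hv : Smooth2 v) (hp : PeriodicS L v) (h0 : ∀ s, v s 0 = 0)
    (Ia : FiniteL2 L (wt m (dS 1 v))) (Id : FiniteL2 L (wt (m - 1) (dPsi 1 v)))
    (Ih : FiniteL2 L (wt m (fun s ψ => dS 1 v s ψ - ω * q s * dPsi 2 v s ψ))) :
    L2sq L (wt m (dS 1 v)) ≤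
      2 * q1 * (L2sq L (wt m (fun s ψ => dS 1 v s ψ - ω * q s * dPsi 2 v s ψ)) / q0
        + (2 * m * ω) ^ 2 * q1 * L2sq L (wt (m - 1) (dPsi 1 v))) := by
  have hq1p : 0 < q1 := lt_of_lt_of_le (hqp L) (hq1 L ⟨hL, le_rfl⟩)
  unfold FiniteL2 at Ia Id Ih
  unfold L2sq
  set D : Set (ℝ × ℝ) := Ioc (0:ℝ) L ×ˢ Ioi (0:ℝ) with hD
  have hDm : MeasurableSet D := measurableSet_Ioc.prod measurableSet_Ioi
  set H : ℝ → ℝ → ℝ := fun s ψ => dS 1 v s ψ - ω * q s * dPsi 2 v s ψ with hH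
  have cS : Continuous (fun p : ℝ × ℝ => dS 1 v p.1 p.2) := cont2 (smooth_dS1 hv)
  have cP : Continuous (fun p : ℝ × ℝ => dPsi 1 v p.1 p.2) := cont2 (smooth_dP1 hv)
  have cPP : Continuous (fun p : ℝ × ℝ => dPsi 2 v p.1 p.2) := cont2 (smooth_dP2 hv)
  have cq : Continuous (fun p : ℝ × ℝ => q p.1) := hqc.comp continuous_fst
  have cH : Continuous (fun p : ℝ × ℝ => H p.1 p.2) := by
    simp only [hH]; fun_prop
  let a : ℝ × ℝ → ℝ := fun p => wt m (dS 1 v) p.1 p.2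
  let d : ℝ × ℝ → ℝ := fun p => wt (m - 1) (dPsi 1 v) p.1 p.2
  let h : ℝ × ℝ → ℝ := fun p => wt m H p.1 p.2
  have ca : Continuous a := by simp only [a, wt]; fun_prop
  have cd : Continuous d := by simp only [d, wt]; fun_prop
  have ch : Continuous h := by simp only [h, wt]; fun_prop
  let W : ℕ → ℝ → ℝ := fun n ψ => (1 + ψ) ^ (2 * m) * (1 - ψ / ((n : ℝ) + 1))
  let W' : ℕ → ℝ → ℝ := fun n ψ =>
    2 * m * (1 + ψ) ^ (2 * m - 1) * (1 - ψ / ((n : ℝ) + 1)) - (1 + ψ) ^ (2 * m) / ((n : ℝ) + 1)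
  have hWs : ∀ n, ContDiff ℝ (⊤ : ℕ∞) (W n) := by
    intro n
    simp only [W]
    fun_prop
  have hWd : ∀ n x, HasDerivAt (W n) (W' n x) x := by
    intro n x
    have e1 := ((hasDerivAt_id x).const_add 1).pow (2 * m)
    have e2 := ((hasDerivAt_id x).div_const ((n : ℝ) + 1)).const_sub 1
    refine (e1.mul e2).congr_deriv ?_
    simp only [W', id, Pi.pow_apply]
    push_cast
    ring
  let f : ℕ → ℝ × ℝ → ℝ := fun n p =>
    (dS 1 v p.1 p.2) ^ 2 * W n p.2 / q p.1 + ω * (dPsi 1 v p.1 p.2 * dS 1 v p.1 p.2 * W' n p.2)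
      - H p.1 p.2 * dS 1 v p.1 p.2 * W n p.2 / q p.1
  have hf0 : ∀ n : ℕ, ∫ p in Ioc (0:ℝ) L ×ˢ Ioc (0:ℝ) ((n : ℝ) + 1), f n p = 0 := by
    intro n
    have hn : (0:ℝ) < (n : ℝ) + 1 := by positivity
    have := ibp hL.le hn.le hv hp h0 (hWs n) (hWd n) (by simp [W, div_self hn.ne'])
    have h2 := integral_const_mul (μ := volume.restrict (Ioc (0:ℝ) L ×ˢ Ioc (0:ℝ) ((n : ℝ) + 1))) ω
      (fun p : ℝ × ℝ => (dPsi 2 v p.1 p.2 * dS 1 v p.1 p.2 * W n p.2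
        + dPsi 1 v p.1 p.2 * dS 1 v p.1 p.2 * W' n p.2))
    rw [this, mul_zero] at h2
    refine Eq.trans ?_ h2
    refine integral_congr_ae (Eventually.of_forall ?_)
    rintro ⟨s, ψ⟩
    have := (hqp s).ne'
    simp only [f, hH]
    field_simp
    ring
  let Fn : ℕ → ℝ × ℝ → ℝ := fun n => indicator {p : ℝ × ℝ | p.2 ≤ (n : ℝ) + 1} (f n)
  have hset : ∀ n : ℕ, MeasurableSet {p : ℝ × ℝ | p.2 ≤ (n : ℝ) + 1} := fun n =>
    measurableSet_le measurable_snd measurable_const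
  have hF0 : ∀ n, ∫ p in D, Fn n p = 0 := by
    intro n
    simp only [Fn]
    rw [setIntegral_indicator (hset n), ← hf0 n]
    congr 2
    ext ⟨s, ψ⟩
    simp [hD, and_assoc]
  let g : ℝ × ℝ → ℝ := fun p =>
    (a p) ^ 2 / q p.1 + (2 * m * ω) * (d p * a p) - h p * a p / q p.1
  let B : ℝ × ℝ → ℝ := fun p => (1 / q0) * (a p) ^ 2 + ω * (2 * m + 2) * ((a p) ^ 2 + (d p) ^ 2)
    + (1 / q0) * ((h p) ^ 2 + (a p) ^ 2)
  have Ia' : Integrable (fun p => (a p) ^ 2) (volume.restrict D) := Ia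
  have Id' : Integrable (fun p => (d p) ^ 2) (volume.restrict D) := Id
  have Ih' : Integrable (fun p => (h p) ^ 2) (volume.restrict D) := Ih
  have IB : Integrable B (volume.restrict D) :=
    ((Ia'.const_mul _).add ((Ia'.add Id').const_mul _)).add ((Ih'.add Ia').const_mul _)
  have cf : ∀ n, Continuous (f n) := by
    intro n
    have c1 : Continuous (fun p : ℝ × ℝ => W n p.2) := by simp only [W]; fun_prop
    have c2 : Continuous (fun p : ℝ × ℝ => W' n p.2) := by simp only [W']; fun_prop
    simp only [f]
    exact (((cS.pow 2).mul c1).div cq (fun p => (hqp _).ne')).add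
      (continuous_const.mul ((cP.mul cS).mul c2)) |>.sub
      (((cH.mul cS).mul c1).div cq (fun p => (hqp _).ne'))
  have cg : Continuous g := by
    simp only [g]
    exact ((ca.pow 2).div cq (fun p => (hqp _).ne')).add
      (continuous_const.mul (cd.mul ca)) |>.sub ((ch.mul ca).div cq (fun p => (hqp _).ne'))
  have hFB : ∀ n, ∀ p ∈ D, ‖Fn n p‖ ≤ B p := by
    rintro n ⟨s, ψ⟩ ⟨hs, hψ⟩
    simp only [mem_Ioi] at hψ
    have hs' := hq s hs
    have hB0 : 0 ≤ B (s, ψ) := by simp only [B]; positivity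
    by_cases hc : ψ ≤ (n : ℝ) + 1
    · have : Fn n (s, ψ) = f n (s, ψ) := indicator_of_mem (s := {p : ℝ × ℝ | p.2 ≤ (n : ℝ) + 1}) hc _
      rw [this, Real.norm_eq_abs]
      have hR : (1:ℝ) ≤ (n : ℝ) + 1 := by simp
      have hR0 : (0:ℝ) < (n : ℝ) + 1 := by positivity
      have hθ0 : 0 ≤ 1 - ψ / ((n : ℝ) + 1) := by
        have : ψ / ((n : ℝ) + 1) ≤ 1 := (div_le_one hR0).2 hc
        linarith
      have hθ1 : 1 - ψ / ((n : ℝ) + 1) ≤ 1 := by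
        have : 0 ≤ ψ / ((n : ℝ) + 1) := by positivity
        linarith
      refine alg_bound (w := (1 + ψ) ^ m) (x := (1 + ψ) ^ (m - 1)) hω hq0 hs' ?_ ?_ (by positivity)
        (by positivity) (by positivity) (wW_bound m hψ hR hc) rfl rfl rfl
      · simp only [W]; positivity
      · simp only [W]
        rw [← pow_mul, mul_comm m 2]
        exact mul_le_of_le_one_right (by positivity) hθ1
    · have : Fn n (s, ψ) = 0 := indicator_of_notMem (s := {p : ℝ × ℝ | p.2 ≤ (n : ℝ) + 1}) hc _
      rw [this, norm_zero]; exact hB0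
  have hlim : ∀ p ∈ D, Tendsto (fun n => Fn n p) atTop (nhds (g p)) := by
    rintro ⟨s, ψ⟩ ⟨hs, hψ⟩
    simp only [mem_Ioi] at hψ
    have l0 : Tendsto (fun n : ℕ => (1:ℝ) / ((n : ℝ) + 1)) atTop (nhds 0) :=
      tendsto_one_div_add_atTop_nhds_zero_nat
    have lθ : Tendsto (fun n : ℕ => 1 - ψ / ((n : ℝ) + 1)) atTop (nhds 1) := by
      have := (l0.const_mul ψ).const_sub 1
      simpa [div_eq_mul_inv] using this
    have lW : Tendsto (fun n : ℕ => W n ψ) atTop (nhds ((1 + ψ) ^ (2 * m))) := by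
      simpa using lθ.const_mul ((1 + ψ) ^ (2 * m))
    have lW' : Tendsto (fun n : ℕ => W' n ψ) atTop (nhds (2 * m * (1 + ψ) ^ (2 * m - 1))) := by
      have := (lθ.const_mul (2 * m * (1 + ψ) ^ (2 * m - 1))).sub (l0.const_mul ((1 + ψ) ^ (2 * m)))
      simpa [div_eq_mul_inv, W'] using this
    have lf : Tendsto (fun n => f n (s, ψ)) atTop (nhds (g (s, ψ))) := by
      have := (((lW.const_mul ((dS 1 v s ψ) ^ 2)).div_const (q s)).add
        ((lW'.const_mul (dPsi 1 v s ψ * dS 1 v s ψ)).const_mul ω)).sub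
        ((lW.const_mul (H s ψ * dS 1 v s ψ)).div_const (q s))
      convert this using 2
      simp only [g, a, d, h, wt]
      rcases Nat.eq_zero_or_pos m with rfl | hm
      · simp
      · have : 2 * m - 1 = (m - 1) + m := by omega
        rw [this, pow_add, mul_comm 2 m, pow_mul]
        ring
    refine lf.congr' ?_
    obtain ⟨N, hN⟩ := exists_nat_ge ψ
    filter_upwards [eventually_ge_atTop N] with n hn
    have : ψ ≤ (n : ℝ) + 1 := by
      have : (N : ℝ) ≤ n := by exact_mod_cast hn
      linarith
    exact (indicator_of_mem (s := {p : ℝ × ℝ | p.2 ≤ (n : ℝ) + 1}) this _).symm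
  have hg0 : ∫ p in D, g p = 0 := by
    have := tendsto_integral_of_dominated_convergence (μ := volume.restrict D) (F := Fn) (f := g) B
      (fun n => ((cf n).aestronglyMeasurable.indicator (hset n))) IB
      (fun n => (ae_restrict_iff' hDm).2 (Eventually.of_forall (hFB n)))
      ((ae_restrict_iff' hDm).2 (Eventually.of_forall hlim))
    simp only [hF0] at this
    exact (tendsto_nhds_unique this tendsto_const_nhds)
  have Ig : Integrable g (volume.restrict D) := by
    refine IB.mono' cg.aestronglyMeasurable ((ae_restrict_iff' hDm).2 (Eventually.of_forall ?_))
    intro p hpD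
    exact le_of_tendsto (hlim p hpD).norm (Eventually.of_forall fun n => hFB n p hpD)
  have Ilow : Integrable (fun p => (a p) ^ 2 / (2 * q1) - (h p) ^ 2 / q0
      - (2 * m * ω) ^ 2 * q1 * (d p) ^ 2) (volume.restrict D) :=
    ((Ia'.div_const _).sub (Ih'.div_const _)).sub (Id'.const_mul _)
  have hle : ∫ p in D, ((a p) ^ 2 / (2 * q1) - (h p) ^ 2 / q0
      - (2 * m * ω) ^ 2 * q1 * (d p) ^ 2) ≤ ∫ p in D, g p := by
    refine setIntegral_mono_on Ilow Ig hDm ?_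
    intro p hpD
    exact alg_young hq0 (hq _ hpD.1) (hq1 _ hpD.1)
  rw [hg0, integral_sub (f := fun p => (a p) ^ 2 / (2 * q1) - (h p) ^ 2 / q0)
    ((Ia'.div_const _).sub (Ih'.div_const _)) (Id'.const_mul _),
    integral_sub (Ia'.div_const _) (Ih'.div_const _), integral_const_mul, integral_div,
    integral_div] at hle
  change ∫ p in D, (a p) ^ 2 ≤ 2 * q1 * ((∫ p in D, (h p) ^ 2) / q0
    + (2 * m * ω) ^ 2 * q1 * ∫ p in D, (d p) ^ 2)
  have : (∫ p in D, (a p) ^ 2) / (2 * q1) ≤ (∫ p in D, (h p) ^ 2) / q0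
    + (2 * m * ω) ^ 2 * q1 * ∫ p in D, (d p) ^ 2 := by linarith
  rw [div_le_iff₀ (by positivity)] at this
  linarith

theorem L2_le {L : ℝ} {f : ℝ → ℝ → ℝ} (hf : Continuous (fun p : ℝ × ℝ => f p.1 p.2))
    {B : ℝ × ℝ → ℝ} (hB : IntegrableOn B (Ioc (0:ℝ) L ×ˢ Ioi (0:ℝ)))
    (h : ∀ s ∈ Ioc (0:ℝ) L, ∀ ψ > (0:ℝ), (f s ψ) ^ 2 ≤ B (s, ψ)) :
    FiniteL2 L f ∧ L2sq L f ≤ ∫ p in Ioc (0:ℝ) L ×ˢ Ioi (0:ℝ), B p := by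
  have hDm : MeasurableSet (Ioc (0:ℝ) L ×ˢ Ioi (0:ℝ)) := measurableSet_Ioc.prod measurableSet_Ioi
  have hI : FiniteL2 L f := by
    refine Integrable.mono' hB (hf.pow 2).aestronglyMeasurable
      ((ae_restrict_iff' hDm).2 (Eventually.of_forall ?_))
    rintro ⟨s, ψ⟩ ⟨hs, hψ⟩
    rw [Real.norm_eq_abs, abs_of_nonneg (sq_nonneg _)]
    exact h s hs ψ hψ
  exact ⟨hI, setIntegral_mono_on hI hB hDm (fun p hp => h p.1 hp.1 p.2 hp.2)⟩

theorem L2sq_nonneg (L : ℝ) (f : ℝ → ℝ → ℝ) : 0 ≤ L2sq L f :=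
  integral_nonneg (fun _ => sq_nonneg _)

theorem exp_int (m : ℕ) :
    IntegrableOn (fun ψ : ℝ => ((1 + ψ) ^ m * Real.exp (-ψ)) ^ 2) (Ioi (0:ℝ)) := by
  refine integrable_of_isBigO_exp_neg (b := 1) one_pos (by fun_prop) ?_
  have h1 : (fun x : ℝ => x ^ (2 * m)) =o[atTop] Real.exp := Real.isLittleO_pow_exp_atTop
  have h2 : (fun x : ℝ => (1 + x) ^ (2 * m)) =o[atTop] fun x => Real.exp (1 + x) :=
    h1.comp_tendsto (tendsto_atTop_add_const_left atTop (1:ℝ) tendsto_id)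
  have h3 : (fun x : ℝ => (1 + x) ^ (2 * m) * Real.exp (-2 * x)) =O[atTop]
      fun x => Real.exp (1 + x) * Real.exp (-2 * x) :=
    h2.isBigO.mul (Asymptotics.isBigO_refl _ _)
  have e1 : (fun ψ : ℝ => ((1 + ψ) ^ m * Real.exp (-ψ)) ^ 2)
      = fun x : ℝ => (1 + x) ^ (2 * m) * Real.exp (-2 * x) := by
    ext x
    rw [mul_pow, ← pow_mul, ← Real.exp_nat_mul, mul_comm m 2]
    congr 2
    push_cast; ring
  have e2 : (fun x : ℝ => Real.exp (1 + x) * Real.exp (-2 * x))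
      = fun x => Real.exp 1 * Real.exp (-1 * x) := by
    ext x
    rw [← Real.exp_add, ← Real.exp_add]; congr 1; ring
  rw [e1]
  rw [e2] at h3
  exact h3.trans (Asymptotics.isBigO_const_mul_self _ _ _)

theorem exp_L2 {L : ℝ} (hL : 0 < L) (m : ℕ) {c : ℝ → ℝ} (hc : Continuous c) :
    FiniteL2 L (wt m (fun s ψ => c s * Real.exp (-ψ))) ∧
    L2sq L (wt m (fun s ψ => c s * Real.exp (-ψ))) =
      (∫ ψ in Ioi (0:ℝ), ((1 + ψ) ^ m * Real.exp (-ψ)) ^ 2) * ∫ s in (0:ℝ)..L, (c s) ^ 2 := by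
  have e : (fun p : ℝ × ℝ => (wt m (fun s ψ => c s * Real.exp (-ψ)) p.1 p.2) ^ 2)
      = fun p : ℝ × ℝ => (c p.1) ^ 2 * ((1 + p.2) ^ m * Real.exp (-p.2)) ^ 2 := by
    ext p; simp only [wt]; ring
  unfold FiniteL2 L2sq
  rw [e]
  have hci : IntegrableOn (fun s => (c s) ^ 2) (Ioc (0:ℝ) L) := by
    have : IntegrableOn (fun s => (c s) ^ 2) (Icc (0:ℝ) L) :=
      (hc.pow 2).continuousOn.integrableOn_compact isCompact_Icc
    exact this.mono_set Ioc_subset_Icc_self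
  constructor
  · rw [IntegrableOn, Measure.volume_eq_prod, ← Measure.prod_restrict]
    exact Integrable.mul_prod hci (exp_int m)
  · rw [Measure.volume_eq_prod,
      setIntegral_prod_mul (fun s => (c s) ^ 2) (fun ψ => ((1 + ψ) ^ m * Real.exp (-ψ)) ^ 2),
      intervalIntegral.integral_of_le hL.le, mul_comm]

theorem diff_eq {q : ℝ → ℝ} (hq : ContDiff ℝ (⊤ : ℕ∞) q) {ω : ℝ} (k : ℕ) {Q F G : ℝ → ℝ → ℝ}
    (hQ : Smooth2 Q) (hF : Smooth2 F) (hG : Smooth2 G)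
    (he : ∀ s : ℝ, ∀ ψ > (0:ℝ), dS 1 Q s ψ - ω * q s * dPsi 2 Q s ψ = F s ψ + dPsi 2 G s ψ)
    (s ψ : ℝ) (hψ : 0 < ψ) :
    dS (k + 1) Q s ψ - ω * q s * dPsi 2 (dS k Q) s ψ = dS k F s ψ + dPsi 2 (dS k G) s ψ
      + ω * ∑ i ∈ Finset.range k,
        (k.choose i : ℝ) * dPsi 2 (dS i Q) s ψ * iteratedDeriv (k - i) q s := by
  have e0 : (fun s => dS 1 Q s ψ) = fun s => (F s ψ + dPsi 2 G s ψ)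
      + ω * ((fun s => dPsi 2 Q s ψ) * q) s := by
    ext x
    have := he x ψ hψ
    simp only [Pi.mul_apply]
    linarith
  have c1 : ContDiff ℝ (⊤ : ℕ∞) (fun s => F s ψ) := smooth_line hF ψ
  have c2 : ContDiff ℝ (⊤ : ℕ∞) (fun s => dPsi 2 G s ψ) := smooth_line (smooth_dP2 hG) ψ
  have c3 : ContDiff ℝ (⊤ : ℕ∞) (fun s => dPsi 2 Q s ψ) := smooth_line (smooth_dP2 hQ) ψ
  have hk : ((k : ℕ∞) : WithTop ℕ∞) ≤ ((⊤ : ℕ∞) : WithTop ℕ∞) := WithTop.coe_le_coe.2 le_top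
  have c1' : ContDiffAt ℝ k (fun s => F s ψ) s := (c1.of_le hk).contDiffAt
  have c2' : ContDiffAt ℝ k (fun s => dPsi 2 G s ψ) s := (c2.of_le hk).contDiffAt
  have c3' : ContDiffAt ℝ k (fun s => dPsi 2 Q s ψ) s := (c3.of_le hk).contDiffAt
  have c4' : ContDiffAt ℝ k q s := (hq.of_le hk).contDiffAt
  have c5' : ContDiffAt ℝ k (fun s => ω * ((fun s => dPsi 2 Q s ψ) * q) s) s :=
    contDiffAt_const.mul (c3'.mul c4')
  have e1 : dS (k + 1) Q s ψ = iteratedDeriv k (fun s => dS 1 Q s ψ) s := by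
    simp only [dS, iteratedDeriv_succ', iteratedDeriv_zero]
  rw [e1, e0, iteratedDeriv_fun_add (c1'.add c2') c5',
    iteratedDeriv_fun_add c1' c2', iteratedDeriv_const_mul_field, iteratedDeriv_mul c3' c4',
    Finset.sum_range_succ]
  have f1 : ∀ i, iteratedDeriv i (fun s => dPsi 2 Q s ψ) s = dPsi 2 (dS i Q) s ψ := by
    intro i
    rw [← comm_k2 i hQ]; rfl
  have f2 : iteratedDeriv k (fun s => dPsi 2 G s ψ) s = dPsi 2 (dS k G) s ψ := by
    rw [← comm_k2 k hG]; rfl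
  have f3 : iteratedDeriv k (fun s => F s ψ) s = dS k F s ψ := rfl
  simp only [f1, f2, f3, Nat.choose_self, Nat.sub_self, iteratedDeriv_zero]
  push_cast
  ring

theorem sum_bound (k : ℕ) (x y : ℕ → ℝ) {M : ℝ} (hy : ∀ i, i ≤ k → |y i| ≤ M) :
    (∑ i ∈ Finset.range k, (k.choose i : ℝ) * x i * y (k - i)) ^ 2
      ≤ k * (4 ^ k * M ^ 2) * ∑ i ∈ Finset.range k, (x i) ^ 2 := by
  have h1 := sq_sum_le_card_mul_sum_sq (s := Finset.range k)
    (f := fun i => (k.choose i : ℝ) * x i * y (k - i))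
  rw [Finset.card_range] at h1
  refine h1.trans ?_
  rw [mul_assoc]
  refine mul_le_mul_of_nonneg_left ?_ (by positivity)
  rw [Finset.mul_sum]
  refine Finset.sum_le_sum fun i _ => ?_
  have hc : (k.choose i : ℝ) ≤ 2 ^ k := by exact_mod_cast Nat.choose_le_two_pow k i
  have hc2 : (k.choose i : ℝ) ^ 2 ≤ 4 ^ k := by
    calc (k.choose i : ℝ) ^ 2 ≤ (2 ^ k) ^ 2 := by gcongr
      _ = 4 ^ k := by rw [← pow_mul, mul_comm, pow_mul]; norm_num
  have hy2 : (y (k - i)) ^ 2 ≤ M ^ 2 := sq_le_sq' (abs_le.1 (hy _ (Nat.sub_le _ _))).1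
    (abs_le.1 (hy _ (Nat.sub_le _ _))).2
  calc ((k.choose i : ℝ) * x i * y (k - i)) ^ 2
      = ((k.choose i : ℝ) ^ 2 * (y (k - i)) ^ 2) * x i ^ 2 := by ring
    _ ≤ (4 ^ k * M ^ 2) * x i ^ 2 := by gcongr

theorem five_sq (a b c d e : ℝ) :
    (a + b + c - d + e) ^ 2 ≤ 5 * (a ^ 2 + b ^ 2 + c ^ 2 + d ^ 2 + e ^ 2) := by
  nlinarith [sq_nonneg (a - b), sq_nonneg (a - c), sq_nonneg (a + d), sq_nonneg (a - e),
    sq_nonneg (b - c), sq_nonneg (b + d), sq_nonneg (b - e), sq_nonneg (c + d),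
    sq_nonneg (c - e), sq_nonneg (d + e)]

set_option maxHeartbeats 2000000 in
/-- **The `∂_s` energy estimate for the `s`-differentiated linear Prandtl problem.** -/
theorem linear_prandtl_ds_estimate
    (L : ℝ) (hL : 0 < L)
    (q_e : ℝ → ℝ) (hqe : ContDiff ℝ (⊤ : ℕ∞) q_e) (hqeper : Function.Periodic q_e L)
    (hqepos : ∀ s, 0 < q_e s)
    (ω₀ : ℝ) (hω₀ : 0 < ω₀) (k m : ℕ) :
    ∃ C > (0:ℝ), ∀ Q F G : ℝ → ℝ → ℝ, ∀ b : ℝ → ℝ,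
      Smooth2 Q → PeriodicS L Q → Smooth2 F → PeriodicS L F →
      Smooth2 G → PeriodicS L G → ContDiff ℝ (⊤ : ℕ∞) b → Function.Periodic b L →
      (∀ s : ℝ, ∀ ψ > (0:ℝ),
        dS 1 Q s ψ - ω₀ * q_e s * dPsi 2 Q s ψ = F s ψ + dPsi 2 G s ψ) →
      (∀ s : ℝ, Q s 0 = b s) →
      (∀ s : ℝ, Tendsto (fun ψ => Q s ψ) atTop (nhds 0)) →
      -- finiteness of all norms appearing
      FiniteL2 L (wt m (dS (k+1) Q)) →
      FiniteL2 L (wt m (dS k F)) → FiniteL2 L (wt m (dPsi 2 (dS k G))) →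
      FiniteL2 L (wt (m-1) (dPsi 1 (dS k Q))) →
      (∀ k' ≤ k, FiniteL2 L (wt m (dPsi 2 (dS k' Q)))) →
      L2sq L (wt m (dS (k+1) Q))
        ≤ C * (L2sq L (wt m (dS k F)) + L2sq L (wt m (dPsi 2 (dS k G)))
            + HnormSq L (k+1) b
            + (if 1 ≤ m then L2sq L (wt (m-1) (dPsi 1 (dS k Q))) else 0)
            + ∑ k' ∈ Finset.range k, L2sq L (wt m (dPsi 2 (dS k' Q)))) := by
  have hqcont : Continuous q_e := hqe.continuous
  obtain ⟨q0, hq0, hq0le⟩ : ∃ q0 > (0:ℝ), ∀ s ∈ Ioc (0:ℝ) L, q0 ≤ q_e s := by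
    obtain ⟨x, -, hx⟩ := isCompact_Icc.exists_isMinOn (nonempty_Icc.2 hL.le) hqcont.continuousOn
    exact ⟨q_e x, hqepos x, fun s hs => hx (Ioc_subset_Icc_self hs)⟩
  have hbd : ∀ j : ℕ, ∃ c : ℝ, ∀ s ∈ Ioc (0:ℝ) L, |iteratedDeriv j q_e s| ≤ c := by
    intro j
    have hcj : Continuous (iteratedDeriv j q_e) :=
      hqe.continuous_iteratedDeriv j (WithTop.coe_le_coe.2 le_top)
    obtain ⟨c, hc⟩ := (isCompact_Icc (a := (0:ℝ)) (b := L)).exists_bound_of_continuousOn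
      hcj.continuousOn
    exact ⟨c, fun s hs => hc s (Ioc_subset_Icc_self hs)⟩
  choose c hc using hbd
  obtain ⟨M, hM0, hM⟩ : ∃ M > (0:ℝ), ∀ j ≤ k, ∀ s ∈ Ioc (0:ℝ) L, |iteratedDeriv j q_e s| ≤ M := by
    refine ⟨∑ j ∈ Finset.range (k + 1), |c j| + 1, by positivity, fun j hj s hs => ?_⟩
    have h1 := (hc j s hs).trans (le_abs_self _)
    have h2 : |c j| ≤ ∑ j ∈ Finset.range (k + 1), |c j| :=
      Finset.single_le_sum (f := fun j => |c j|) (fun i _ => abs_nonneg _)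
        (Finset.mem_range.2 (by omega))
    linarith
  have hqM : ∀ s ∈ Ioc (0:ℝ) L, q_e s ≤ M := by
    intro s hs
    have := hM 0 (Nat.zero_le _) s hs
    rw [iteratedDeriv_zero] at this
    exact (le_abs_self _).trans this
  set K : ℕ → ℝ := fun m => ∫ ψ in Ioi (0:ℝ), ((1 + ψ) ^ m * Real.exp (-ψ)) ^ 2 with hK
  have hK0 : ∀ m, 0 ≤ K m := fun m => integral_nonneg (fun _ => sq_nonneg _)
  set N : ℝ := 5 * (1 + ω₀ ^ 2 * (k * (4 ^ k * M ^ 2)) + ω₀ ^ 2 * M ^ 2) with hN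
  have hN0 : 0 < N := by positivity
  set E : ℝ := 2 * M * (N * (1 + K m) / q0 + (2 * m * ω₀) ^ 2 * M * (2 * (1 + K (m - 1)))) with hE
  have hE0 : 0 ≤ E := by
    have := hK0 m
    have := hK0 (m - 1)
    positivity
  refine ⟨2 * E + 2 * K m + 1, by have := hK0 m; positivity, ?_⟩
  intro Q F G b hQ hQp hF hFp hG hGp hb hbp heq hbc _ IQ IF IG IP IPP
  have hbcont : ∀ j, Continuous (iteratedDeriv j b) := fun j =>
    hb.continuous_iteratedDeriv j (WithTop.coe_le_coe.2 le_top)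
  -- the lift
  set u : ℝ → ℝ → ℝ := dS k Q with hu
  have su : Smooth2 u := smooth_dS k hQ
  have hb2 : Smooth2 (fun s _ => b s) := by
    unfold Smooth2
    exact hb.comp contDiff_fst
  have hbk : Smooth2 (dS k (fun s _ => b s)) := smooth_dS k hb2
  have hbk' : ∀ s ψ, dS k (fun s _ => b s) s ψ = iteratedDeriv k b s := fun s ψ => rfl
  have hbsm : ContDiff ℝ (⊤ : ℕ∞) (iteratedDeriv k b) := smooth_line hbk 0
  let v : ℝ → ℝ → ℝ := fun s ψ => u s ψ - iteratedDeriv k b s * Real.exp (-ψ)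
  have sv : Smooth2 v := by
    unfold Smooth2
    have h1 : ContDiff ℝ (⊤ : ℕ∞) (fun p : ℝ × ℝ => iteratedDeriv k b p.1) :=
      hbsm.comp contDiff_fst
    have h2 : ContDiff ℝ (⊤ : ℕ∞) (fun p : ℝ × ℝ => Real.exp (-p.2)) :=
      Real.contDiff_exp.comp contDiff_snd.neg
    exact ContDiff.sub su (h1.mul h2)
  have pv : PeriodicS L v := by
    intro ψ s
    have h1 := per_dS k hQp ψ s
    have h2 := per_dS k (h := fun s _ => b s) (L := L) (fun ψ s => hbp s) ψ s
    simp only [hbk'] at h2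
    simp only at h1
    simp only [v, hu, h1, h2]
  have v0 : ∀ s, v s 0 = 0 := by
    intro s
    have : u s 0 = iteratedDeriv k b s := by
      simp only [hu, dS, hbc]
    simp [v, this]
  have hexp : ∀ ψ : ℝ, HasDerivAt (fun x : ℝ => Real.exp (-x)) (-Real.exp (-ψ)) ψ := by
    intro ψ
    simpa using (hasDerivAt_neg ψ).exp
  have vS : ∀ s ψ, dS 1 v s ψ = dS (k + 1) Q s ψ - iteratedDeriv (k + 1) b s * Real.exp (-ψ) := by
    intro s ψ
    apply dS1_eq
    have h1 := hasS su s ψ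
    rw [hu, ← dS_succ] at h1
    have h2 : HasDerivAt (iteratedDeriv k b) (iteratedDeriv (k + 1) b s) s := by
      rw [iteratedDeriv_succ]
      exact (hbsm.differentiable (by simp) s).hasDerivAt
    exact h1.sub (h2.mul_const _)
  have vP : ∀ s ψ, dPsi 1 v s ψ = dPsi 1 u s ψ + iteratedDeriv k b s * Real.exp (-ψ) := by
    intro s ψ
    apply dP1_eq
    refine ((hasP su s ψ).sub ((hexp ψ).const_mul (iteratedDeriv k b s))).congr_deriv ?_
    ring
  have vPP : ∀ s ψ, dPsi 2 v s ψ = dPsi 2 u s ψ - iteratedDeriv k b s * Real.exp (-ψ) := by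
    intro s ψ
    rw [dP_two, dP_two]
    apply dP1_eq
    simp only [vP]
    refine ((hasP (smooth_dP1 su) s ψ).add
      ((hexp ψ).const_mul (iteratedDeriv k b s))).congr_deriv ?_
    ring
  -- lift terms
  have X1 := exp_L2 hL m (hbcont (k + 1))
  have X0 := exp_L2 hL m (hbcont k)
  have Y0 := exp_L2 hL (m - 1) (hbcont k)
  set I1 : ℝ := ∫ s in (0:ℝ)..L, (iteratedDeriv (k + 1) b s) ^ 2 with hI1
  set I0 : ℝ := ∫ s in (0:ℝ)..L, (iteratedDeriv k b s) ^ 2 with hI0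
  have hIn : ∀ j, 0 ≤ ∫ s in (0:ℝ)..L, (iteratedDeriv j b s) ^ 2 := fun j =>
    intervalIntegral.integral_nonneg hL.le (fun _ _ => sq_nonneg _)
  have hI1n : 0 ≤ I1 := hIn _
  have hI0n : 0 ≤ I0 := hIn _
  have hH : I0 + I1 ≤ HnormSq L (k + 1) b := by
    unfold HnormSq
    rw [Finset.sum_range_succ, Finset.sum_range_succ]
    have : 0 ≤ ∑ j ∈ Finset.range k, ∫ s in (0:ℝ)..L, (iteratedDeriv j b s) ^ 2 :=
      Finset.sum_nonneg (fun j _ => hIn j)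
    linarith
  have csQ := cont2 (smooth_dS (k + 1) hQ)
  have cvS := cont2 (smooth_dS1 sv)
  have cvP := cont2 (smooth_dP1 sv)
  have cvPP := cont2 (smooth_dP2 sv)
  have cw : ∀ n : ℕ, Continuous (fun p : ℝ × ℝ => (1 + p.2) ^ n) := fun n => by fun_prop
  have cq : Continuous (fun p : ℝ × ℝ => q_e p.1) := hqcont.comp continuous_fst
  unfold FiniteL2 at X1 X0 Y0 IQ IF IG IP IPP
  -- ∂_s v
  have A1 := L2_le (L := L) (f := wt m (dS 1 v)) ((cw m).mul cvS) ((IQ.add X1.1).const_mul 2) (by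
    intro s hs ψ hψ
    simp only [wt, vS, Pi.add_apply]
    nlinarith [sq_nonneg ((1 + ψ) ^ m * dS (k + 1) Q s ψ
      + (1 + ψ) ^ m * (iteratedDeriv (k + 1) b s * Real.exp (-ψ)))])
  -- ∂_ψ v
  have A2 := L2_le (L := L) (f := wt (m - 1) (dPsi 1 v)) ((cw (m - 1)).mul cvP)
    ((IP.add Y0.1).const_mul 2) (by
    intro s hs ψ hψ
    simp only [wt, vP, Pi.add_apply]
    nlinarith [sq_nonneg ((1 + ψ) ^ (m - 1) * dPsi 1 u s ψ
      - (1 + ψ) ^ (m - 1) * (iteratedDeriv k b s * Real.exp (-ψ)))])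
  -- ∂_s Q^{(k)} back from v
  have A3 := L2_le (L := L) (f := wt m (dS (k + 1) Q)) ((cw m).mul csQ)
    ((Integrable.add A1.1 X1.1).const_mul 2) (by
    intro s hs ψ hψ
    simp only [wt, vS, Pi.add_apply]
    nlinarith [sq_nonneg ((1 + ψ) ^ m * (dS (k + 1) Q s ψ
      - iteratedDeriv (k + 1) b s * Real.exp (-ψ))
      - (1 + ψ) ^ m * (iteratedDeriv (k + 1) b s * Real.exp (-ψ)))])
  have IS : Integrable (fun p : ℝ × ℝ => ∑ i ∈ Finset.range k,
      (wt m (dPsi 2 (dS i Q)) p.1 p.2) ^ 2)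
      (volume.restrict (Ioc (0:ℝ) L ×ˢ Ioi (0:ℝ))) :=
    integrable_finsetSum _ (fun i hi => IPP i (Finset.mem_range.1 hi).le)
  have A4 := L2_le (L := L)
    (f := wt m (fun s ψ => dS 1 v s ψ - ω₀ * q_e s * dPsi 2 v s ψ))
    ((cw m).mul (cvS.sub ((continuous_const.mul cq).mul cvPP)))
    (((((Integrable.add IF IG).add IS).add X1.1).add X0.1).const_mul N) (by
    intro s hs ψ hψ
    have hde := diff_eq hqe k hQ hF hG heq s ψ hψ
    have hval : dS 1 v s ψ - ω₀ * q_e s * dPsi 2 v s ψ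
        = dS k F s ψ + dPsi 2 (dS k G) s ψ
          + ω₀ * (∑ i ∈ Finset.range k,
            (k.choose i : ℝ) * dPsi 2 (dS i Q) s ψ * iteratedDeriv (k - i) q_e s)
          - iteratedDeriv (k + 1) b s * Real.exp (-ψ)
          + ω₀ * q_e s * (iteratedDeriv k b s * Real.exp (-ψ)) := by
      rw [vS, vPP]
      linarith
    have hsb := sum_bound k (fun i => wt m (dPsi 2 (dS i Q)) s ψ) (fun j => iteratedDeriv j q_e s)
      (fun i hi => hM i hi s hs)
    have hsum : (1 + ψ) ^ m * (∑ i ∈ Finset.range k,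
            (k.choose i : ℝ) * dPsi 2 (dS i Q) s ψ * iteratedDeriv (k - i) q_e s)
        = ∑ i ∈ Finset.range k,
            (k.choose i : ℝ) * wt m (dPsi 2 (dS i Q)) s ψ * iteratedDeriv (k - i) q_e s := by
      rw [Finset.mul_sum]
      refine Finset.sum_congr rfl fun i _ => ?_
      simp only [wt]; ring
    simp only [Pi.add_apply]
    set T := ∑ i ∈ Finset.range k,
            (k.choose i : ℝ) * wt m (dPsi 2 (dS i Q)) s ψ * iteratedDeriv (k - i) q_e s with hT
    set Sg := ∑ i ∈ Finset.range k, (wt m (dPsi 2 (dS i Q)) s ψ) ^ 2 with hSg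
    have hSg0 : 0 ≤ Sg := Finset.sum_nonneg (fun i _ => sq_nonneg _)
    have hwv : wt m (fun s ψ => dS 1 v s ψ - ω₀ * q_e s * dPsi 2 v s ψ) s ψ
        = wt m (dS k F) s ψ + wt m (dPsi 2 (dS k G)) s ψ + ω₀ * T
          - wt m (fun s ψ => iteratedDeriv (k + 1) b s * Real.exp (-ψ)) s ψ
          + ω₀ * q_e s * wt m (fun s ψ => iteratedDeriv k b s * Real.exp (-ψ)) s ψ := by
      rw [← hsum]
      simp only [wt, hval]
      ring
    rw [hwv]
    refine (five_sq _ _ _ _ _).trans ?_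
    set a1 := wt m (dS k F) s ψ
    set a2 := wt m (dPsi 2 (dS k G)) s ψ
    set a3 := wt m (fun s ψ => iteratedDeriv (k + 1) b s * Real.exp (-ψ)) s ψ
    set a4 := wt m (fun s ψ => iteratedDeriv k b s * Real.exp (-ψ)) s ψ
    have hq2 : (q_e s) ^ 2 ≤ M ^ 2 := by
      have := hqM s hs
      have := (hqepos s).le
      gcongr
    have b1 : (ω₀ * T) ^ 2 ≤ ω₀ ^ 2 * (k * (4 ^ k * M ^ 2)) * Sg := by
      rw [mul_pow, mul_assoc]
      exact mul_le_mul_of_nonneg_left hsb (by positivity)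
    have b2 : (ω₀ * q_e s * a4) ^ 2 ≤ ω₀ ^ 2 * M ^ 2 * a4 ^ 2 := by
      rw [mul_pow, mul_pow]
      gcongr
    have n1 : 0 ≤ ω₀ ^ 2 * (k * (4 ^ k * M ^ 2)) := by positivity
    have n2 : 0 ≤ ω₀ ^ 2 * M ^ 2 := by positivity
    have p1 := sq_nonneg a1
    have p2 := sq_nonneg a2
    have p3 := sq_nonneg a3
    have p4 := sq_nonneg a4
    rw [hN]
    generalize ω₀ ^ 2 * (k * (4 ^ k * M ^ 2)) = c1 at *
    generalize ω₀ ^ 2 * M ^ 2 = c2 at *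
    nlinarith [mul_nonneg n1 p1, mul_nonneg n1 p2, mul_nonneg n1 p3, mul_nonneg n1 p4,
      mul_nonneg n2 p1, mul_nonneg n2 p2, mul_nonneg n2 p3, mul_nonneg n2 hSg0])
  have main := core hL hqcont hq0 hqepos hq0le hqM hω₀ m sv pv v0 A1.1 A2.1 A4.1
  have B2 := A2.2
  have B3 := A3.2
  have B4 := A4.2
  rw [integral_const_mul, integral_add' IP Y0.1] at B2
  rw [integral_const_mul, integral_add' A1.1 X1.1] at B3
  rw [integral_const_mul, integral_add' (((Integrable.add IF IG).add IS).add X1.1) X0.1,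
    integral_add' ((Integrable.add IF IG).add IS) X1.1,
    integral_add' (Integrable.add IF IG) IS, integral_add' IF IG,
    integral_finsetSum _ (fun i hi => IPP i (Finset.mem_range.1 hi).le)] at B4
  change _ ≤ 2 * (L2sq L (wt (m - 1) (dPsi 1 u)) + L2sq L (wt (m - 1) _)) at B2
  change _ ≤ 2 * (L2sq L (wt m (dS 1 v)) + L2sq L (wt m _)) at B3
  change _ ≤ N * (L2sq L (wt m (dS k F)) + L2sq L (wt m (dPsi 2 (dS k G)))
    + (∑ i ∈ Finset.range k, L2sq L (wt m (dPsi 2 (dS i Q)))) + L2sq L (wt m _)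
    + L2sq L (wt m _)) at B4
  rw [Y0.2] at B2
  rw [X1.2] at B3
  rw [X1.2, X0.2] at B4
  change _ ≤ 2 * (_ + K (m - 1) * I0) at B2
  change _ ≤ 2 * (_ + K m * I1) at B3
  change _ ≤ N * (_ + K m * I1 + K m * I0) at B4
  have nF := L2sq_nonneg L (wt m (dS k F))
  have nG := L2sq_nonneg L (wt m (dPsi 2 (dS k G)))
  have nP := L2sq_nonneg L (wt (m - 1) (dPsi 1 u))
  have nS : 0 ≤ ∑ i ∈ Finset.range k, L2sq L (wt m (dPsi 2 (dS i Q))) :=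
    Finset.sum_nonneg (fun i _ => L2sq_nonneg _ _)
  have nd : 0 ≤ (if 1 ≤ m then L2sq L (wt (m - 1) (dPsi 1 u)) else 0) := by
    split_ifs
    · exact nP
    · exact le_rfl
  have hKm := hK0 m
  have hKm1 := hK0 (m - 1)
  set S := L2sq L (wt m (dS k F)) + L2sq L (wt m (dPsi 2 (dS k G))) + HnormSq L (k + 1) b
    + (if 1 ≤ m then L2sq L (wt (m - 1) (dPsi 1 u)) else 0)
    + ∑ k' ∈ Finset.range k, L2sq L (wt m (dPsi 2 (dS k' Q))) with hS
  have hS0 : 0 ≤ S := by linarith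
  have hIS : I0 + I1 ≤ S := by linarith
  have C4 : L2sq L (wt m (fun s ψ => dS 1 v s ψ - ω₀ * q_e s * dPsi 2 v s ψ))
      ≤ N * (1 + K m) * S := by
    refine B4.trans ?_
    rw [mul_assoc N (1 + K m) S]
    refine mul_le_mul_of_nonneg_left ?_ hN0.le
    nlinarith [mul_le_mul_of_nonneg_left hIS hKm]
  have C2 : (2 * m * ω₀) ^ 2 * M * L2sq L (wt (m - 1) (dPsi 1 v))
      ≤ (2 * m * ω₀) ^ 2 * M * (2 * (1 + K (m - 1))) * S := by
    rcases Nat.eq_zero_or_pos m with hm | hm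
    · simp [hm]
    · rw [mul_assoc _ _ S]
      refine mul_le_mul_of_nonneg_left ?_ (by positivity)
      refine B2.trans ?_
      have hif : (if 1 ≤ m then L2sq L (wt (m - 1) (dPsi 1 u)) else 0)
        = L2sq L (wt (m - 1) (dPsi 1 u)) := if_pos hm
      rw [hif] at hS
      have hPS : L2sq L (wt (m - 1) (dPsi 1 u)) ≤ S := by linarith
      have hI0S : I0 ≤ S := by linarith
      nlinarith [mul_le_mul_of_nonneg_left hI0S hKm1]
  have C1 : L2sq L (wt m (dS 1 v)) ≤ E * S := by
    refine main.trans ?_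
    have : L2sq L (wt m (fun s ψ => dS 1 v s ψ - ω₀ * q_e s * dPsi 2 v s ψ)) / q0
        ≤ N * (1 + K m) / q0 * S := by
      rw [div_mul_eq_mul_div]
      gcongr
    calc _ ≤ 2 * M * (N * (1 + K m) / q0 * S
          + (2 * m * ω₀) ^ 2 * M * (2 * (1 + K (m - 1))) * S) :=
          mul_le_mul_of_nonneg_left (add_le_add this C2) (by positivity)
      _ = E * S := by rw [hE]; ring
  have hI1S : I1 ≤ S := by linarith
  have := mul_le_mul_of_nonneg_left hI1S hKm
  linarith
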